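/- arXiv:2505.04920 — 4 statements merged into one kernel-verified Lean document; each statement's English description precedes it below -/
import Mathlib

section
/- Let n ≥ 2 be an integer and let H be the graph obtained from the path P_n on n vertices by attaching a triangle K₃ onto one edge of P_n (i.e., adding one new vertex adjacent to both endpoints of that edge). Then sn(H) = sn(P_n, 3) = ⌈(n+1)/2⌉. -/
/-!
Both lower bounds come from one inequality: if a proper 3-coloring `C` of a graph with `E` edges
is the only one agreeing with `C` on `S`, then `2|V| ≤ 2|S| + E` (`two_mul_card_le`). Indeed, for
each color `m`, every connected component of the subgraph spanned by the two other colors (a Kempe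
chain) has to meet `S`, because otherwise its two colors could be swapped. Each vertex lies in two
Kempe chains, and counting chains as "vertices minus edges" over the three colors gives at least
`2|V| - E` chains, of which each vertex of `S` meets two. The count is carried out by linear
algebra: functions on pairs (vertex, missing color) that are constant along Kempe chains and vanish
over `S` must be zero, so the number of unknowns is at most the number of equations. For `P_n`, and
equally for the path with a triangle attached, the inequality reads `n + 1 ≤ 2|S|`.

For the upper bound, color vertex `v` of the path by `v mod 3` and reveal the even vertices and the
last one: every hidden vertex has two neighbors of distinct known colors and is forced. The
additional vertex of the triangle is forced as well.
-/

open SimpleGraph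

/-- The `k`-Sudoku number `sn(G,k)`: the least cardinality of a set `S` of vertices of `G`
admitting a partial proper `k`-coloring that extends uniquely to a proper `k`-coloring of `G`. -/
noncomputable def sudokuNumber {V : Type*} [Fintype V] (G : SimpleGraph V) (k : ℕ) : ℕ :=
  sInf {m | ∃ S : Finset V, S.card = m ∧ ∃ C0 : V → Fin k,
    ∃! C : G.Coloring (Fin k), ∀ v ∈ S, C v = C0 v}


/-- The Sudoku number `sn(G) = sn(G, χ(G))`. -/
noncomputable def sudokuNum {V : Type*} [Fintype V] (G : SimpleGraph V) : ℕ :=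
  sudokuNumber G G.chromaticNumber.toNat


/-- Attach a complete graph `K_m` onto the edge `uv` of `G`: add `m - 2` new vertices which,
together with `u` and `v`, form a clique of size `m`. -/
def attachClique {V : Type*} (G : SimpleGraph V) (u v : V) (m : ℕ) :
    SimpleGraph (V ⊕ Fin (m - 2)) :=
  SimpleGraph.fromRel (fun a b =>
    (∃ x y, a = Sum.inl x ∧ b = Sum.inl y ∧ G.Adj x y) ∨
    (∃ i : Fin (m - 2), (a = Sum.inl u ∨ a = Sum.inl v) ∧ b = Sum.inr i) ∨
    (∃ i j : Fin (m - 2), a = Sum.inr i ∧ b = Sum.inr j))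

theorem fin3_forced : ∀ x y a b : Fin 3, a ≠ b → x ≠ a → x ≠ b → y ≠ a → y ≠ b → x = y := by
  decide

theorem fin3_swap_ne : ∀ m c : Fin 3, c ≠ m → -(m + c) ≠ c := by decide

/-- Adjacent vertices colored `a ≠ b` keep distinct colors under a partial swap of the two colors
other than `m`, if vertices of color `m` are never swapped and, when neither end has color `m`,
either both ends are swapped or none. -/
theorem fin3_swap_proper : ∀ (m a b : Fin 3) (p q : Bool), a ≠ b → (a = m → p = false) →
    (b = m → q = false) → (m = -(a + b) → p = q) →
    (if p then -(m + a) else a) ≠ (if q then -(m + b) else b) := by decide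

/-- The Kempe chain inequality `2|V| ≤ 2|S| + |E|`. The edges are given by an enumeration
`e : ι → V × V` containing every edge in at least one orientation. In `Fin 3`, the color different
from `a ≠ b` is `-(a + b)`, as `0 + 1 + 2 = 0`. -/
theorem two_mul_card_le {V ι : Type*} [Fintype V] [Fintype ι] (G : SimpleGraph V)
    (e : ι → V × V) (he : ∀ u v, G.Adj u v → ∃ k, e k = (u, v) ∨ e k = (v, u))
    (S : Finset V) (C : G.Coloring (Fin 3))
    (hC : ∀ C' : G.Coloring (Fin 3), (∀ v ∈ S, C' v = C v) → C' = C) :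
    2 * Fintype.card V ≤ 2 * S.card + Fintype.card ι := by
  -- The coordinate `(v, m)` stands for the Kempe chain through `v` avoiding color `m ≠ C v`.
  -- The equations say: the meaningless coordinates `(v, C v)` vanish; those over `S` vanish;
  -- the two ends of an edge have equal values for the color missing on that edge.
  let proj : V × Fin 3 → (V × Fin 3 → ℚ) →ₗ[ℚ] ℚ := fun p => LinearMap.proj p
  let L : (V × Fin 3 → ℚ) →ₗ[ℚ] (V ⊕ (S × Fin 2) ⊕ ι → ℚ) :=
    LinearMap.pi (Sum.elim
      (fun v => proj (v, C v))
      (Sum.elim (fun p => proj (p.1.1, C p.1.1 + 1 + p.2.castSucc))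
        (fun k => proj ((e k).1, -(C (e k).1 + C (e k).2))
          - proj ((e k).2, -(C (e k).1 + C (e k).2)))))
  have hinj : Function.Injective L := by
    rw [← LinearMap.ker_eq_bot, LinearMap.ker_eq_bot']
    intro f hf
    have h1 : ∀ v, f (v, C v) = 0 := fun v => congrFun hf (Sum.inl v)
    have h2 : ∀ v ∈ S, ∀ j : Fin 2, f (v, C v + 1 + j.castSucc) = 0 := fun v hv j =>
      congrFun hf (Sum.inr (Sum.inl (⟨v, hv⟩, j)))
    have h3 : ∀ k, f ((e k).1, -(C (e k).1 + C (e k).2))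
        = f ((e k).2, -(C (e k).1 + C (e k).2)) := fun k =>
      sub_eq_zero.1 (congrFun hf (Sum.inr (Sum.inr k)))
    have hS : ∀ v ∈ S, ∀ m, f (v, m) = 0 := by
      intro v hv m
      have key : ∀ m c : Fin 3, m = c ∨ ∃ j : Fin 2, m = c + 1 + j.castSucc := by decide
      rcases key m (C v) with h | ⟨j, h⟩
      · rw [h, h1]
      · rw [h, h2 v hv]
    have hE : ∀ u v, G.Adj u v → f (u, -(C u + C v)) = f (v, -(C u + C v)) := by
      intro u v huv
      obtain ⟨k, hk | hk⟩ := he u v huv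
      · simpa [hk] using h3 k
      · have := h3 k
        simp only [hk] at this
        rw [add_comm (C u), this]
    have h0 : ∀ v m, f (v, m) = 0 := by
      intro v m
      -- The recoloring that swaps the two colors other than `m` on the support of `f (·, m)`.
      let D : G.Coloring (Fin 3) := Coloring.mk
        (fun v => if decide (f (v, m) ≠ 0) then -(m + C v) else C v) (by
          intro u v huv
          apply fin3_swap_proper m (C u) (C v) _ _ (C.valid huv)
          · rintro rfl; simp [h1]
          · rintro rfl; simp [h1]
          · rintro rfl; rw [hE u v huv])
      have hD : D = C := hC D fun v hv => by
        change (if decide (f (v, m) ≠ 0) then -(m + C v) else C v) = C v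
        simp [hS v hv m]
      by_contra hne
      have hv : (if decide (f (v, m) ≠ 0) then -(m + C v) else C v) = C v :=
        DFunLike.congr_fun hD v
      rw [if_pos (by simpa using hne)] at hv
      refine fin3_swap_ne m (C v) ?_ hv
      rintro rfl
      exact hne (h1 v)
    funext p
    exact h0 p.1 p.2
  have := LinearMap.finrank_le_finrank_of_injective hinj
  simp only [Module.finrank_fintype_fun_eq_card, Fintype.card_prod, Fintype.card_sum,
    Fintype.card_fin, Fintype.card_coe] at this
  omega

/-- A lower bound on the size of all uniquely extendable sets together with one small such set
determines the Sudoku number. -/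
theorem sudokuNumber_eq {V : Type*} [Fintype V] (G : SimpleGraph V) (N : ℕ)
    (hlow : ∀ (S : Finset V) (C : G.Coloring (Fin 3)),
      (∀ C' : G.Coloring (Fin 3), (∀ v ∈ S, C' v = C v) → C' = C) → N ≤ S.card)
    (S : Finset V) (hS : S.card ≤ N) (C : G.Coloring (Fin 3))
    (hC : ∀ C' : G.Coloring (Fin 3), (∀ v ∈ S, C' v = C v) → C' = C) :
    sudokuNumber G 3 = N := by
  have hmem : S.card ∈ {m | ∃ S : Finset V, S.card = m ∧ ∃ C0 : V → Fin 3,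
      ∃! C : G.Coloring (Fin 3), ∀ v ∈ S, C v = C0 v} :=
    ⟨S, rfl, C, C, fun _ _ => rfl, hC⟩
  apply le_antisymm
  · exact (Nat.sInf_le hmem).trans hS
  · obtain ⟨T, hT, C0, D, hD, huniq⟩ := Nat.sInf_mem ⟨_, hmem⟩
    refine (hlow T D fun C' h => huniq C' fun v hv => ?_).trans hT.le
    rw [h v hv, hD v hv]

/-- The color `a mod 3`. -/
def modColor (a : ℕ) : Fin 3 := ⟨a % 3, Nat.mod_lt _ (by norm_num)⟩

theorem modColor_ne {a b : ℕ} (h : a % 3 ≠ b % 3) : modColor a ≠ modColor b := by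
  simpa [modColor] using h

/-- The revealed vertices of the path: the even ones and the last one. -/
def revealed (n : ℕ) (hn : 2 ≤ n) : Finset (Fin n) :=
  Finset.univ.image fun k : Fin ((n + 2) / 2) => ⟨min (2 * k.1) (n - 1), by omega⟩

theorem card_revealed_le (n : ℕ) (hn : 2 ≤ n) : (revealed n hn).card ≤ (n + 2) / 2 :=
  Finset.card_image_le.trans (by simp)

theorem mem_revealed {n : ℕ} (hn : 2 ≤ n) (v : Fin n) (hv : v.1 % 2 = 0 ∨ v.1 + 1 = n) :
    v ∈ revealed n hn := by
  simp only [revealed, Finset.mem_image, Finset.mem_univ, true_and, Fin.ext_iff]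
  exact ⟨⟨(v.1 + 1) / 2, by omega⟩, by simp only; omega⟩

/-- A vertex coloring of the path by `v mod 3` on the revealed vertices is `v mod 3` everywhere. -/
theorem eq_modColor {n : ℕ} (hn : 2 ≤ n) (c : Fin n → Fin 3)
    (hc : ∀ u v : Fin n, u.1 + 1 = v.1 → c u ≠ c v)
    (hr : ∀ v ∈ revealed n hn, c v = modColor v.1) (v : Fin n) : c v = modColor v.1 := by
  by_cases hv : v.1 % 2 = 0 ∨ v.1 + 1 = n
  · exact hr v (mem_revealed hn v hv)
  push Not at hv
  have hlt := v.2
  have ha := hr ⟨v.1 - 1, by omega⟩ (mem_revealed hn _ (by left; simp only; omega))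
  have hb := hr ⟨v.1 + 1, by omega⟩ (mem_revealed hn _ (by left; simp only; omega))
  have ha' := hc ⟨v.1 - 1, by omega⟩ v (by simp only; omega)
  have hb' := hc v ⟨v.1 + 1, by omega⟩ rfl
  rw [ha] at ha'
  rw [hb] at hb'
  exact fin3_forced _ _ (modColor (v.1 - 1)) (modColor (v.1 + 1)) (modColor_ne (by omega))
    ha'.symm hb' (modColor_ne (by omega)) (modColor_ne (by omega))

theorem sudokuNumber_path (n : ℕ) (hn : 2 ≤ n) :
    sudokuNumber (pathGraph n) 3 = (n + 2) / 2 := by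
  refine sudokuNumber_eq _ _ (fun S C hC => ?_) (revealed n hn) (card_revealed_le n hn)
    (Coloring.mk (fun v => modColor v.1) ?_) ?_
  · have := two_mul_card_le (pathGraph n)
      (fun k : Fin (n - 1) => ((⟨k.1, by omega⟩ : Fin n), (⟨k.1 + 1, by omega⟩ : Fin n)))
      (fun u v huv => by
        have hu := u.2
        have hv := v.2
        rcases pathGraph_adj.1 huv with h | h
        · exact ⟨⟨u.1, by omega⟩, Or.inl (by ext <;> simp [h])⟩
        · exact ⟨⟨v.1, by omega⟩, Or.inr (by ext <;> simp [h])⟩) S C hC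
    simp only [Fintype.card_fin] at this
    omega
  · intro u v huv
    apply modColor_ne
    rcases pathGraph_adj.1 huv with h | h <;> omega
  · intro C' h
    ext1 v
    exact eq_modColor hn C' (fun u v huv => C'.valid (pathGraph_adj.2 (Or.inl huv))) h v

section Triangle

variable {V : Type*} {G : SimpleGraph V} {u v : V}

theorem attach_adj_inl_inl {x y : V} :
    (attachClique G u v 3).Adj (Sum.inl x) (Sum.inl y) ↔ G.Adj x y := by
  simp only [attachClique, SimpleGraph.fromRel_adj]
  constructor
  · rintro ⟨-, h | h⟩
    · simpa using h
    · simpa [G.adj_comm] using h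
  · intro h
    exact ⟨by simpa using h.ne, Or.inl (Or.inl ⟨x, y, rfl, rfl, h⟩)⟩

theorem attach_adj_inl_inr {x : V} {j : Fin (3 - 2)} :
    (attachClique G u v 3).Adj (Sum.inl x) (Sum.inr j) ↔ x = u ∨ x = v := by
  simp [attachClique, Subsingleton.elim (α := Fin 1) j 0]

theorem attach_not_adj_inr_inr {j k : Fin (3 - 2)} :
    ¬ (attachClique G u v 3).Adj (Sum.inr j) (Sum.inr k) := by
  have : j = k := Subsingleton.elim (α := Fin 1) j k
  subst this
  exact SimpleGraph.irrefl _

end Triangle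

/-- The coloring of the path with a triangle attached on `{i, i + 1}` that extends `v mod 3`. -/
def attachColoring (n i : ℕ) (hi : i + 1 < n) :
    (attachClique (pathGraph n) ⟨i, Nat.lt_of_succ_lt hi⟩ ⟨i + 1, hi⟩ 3).Coloring (Fin 3) :=
  Coloring.mk (Sum.elim (fun v => modColor v.1) (fun _ => modColor (i + 2))) (by
    have key : ∀ x : Fin n, x = ⟨i, Nat.lt_of_succ_lt hi⟩ ∨ x = ⟨i + 1, hi⟩ →
        modColor x.1 ≠ modColor (i + 2) := by
      rintro x (rfl | rfl) <;> apply modColor_ne <;> simp only <;> omega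
    rintro (x | x) (y | y) h
    · apply modColor_ne
      rcases pathGraph_adj.1 (attach_adj_inl_inl.1 h) with h | h <;> omega
    · exact key x (attach_adj_inl_inr.1 h)
    · exact (key y (attach_adj_inl_inr.1 h.symm)).symm
    · exact absurd h attach_not_adj_inr_inr)

theorem chromaticNumber_attach (n i : ℕ) (hi : i + 1 < n) :
    (attachClique (pathGraph n) ⟨i, Nat.lt_of_succ_lt hi⟩ ⟨i + 1, hi⟩ 3).chromaticNumber = 3 := by
  apply le_antisymm
  · exact Colorable.chromaticNumber_le ⟨attachColoring n i hi⟩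
  · have hcl : (attachClique (pathGraph n) ⟨i, Nat.lt_of_succ_lt hi⟩ ⟨i + 1, hi⟩ 3).IsNClique 3
        {Sum.inl ⟨i, Nat.lt_of_succ_lt hi⟩, Sum.inl ⟨i + 1, hi⟩, Sum.inr 0} :=
      is3Clique_triple_iff.2 ⟨attach_adj_inl_inl.2 (pathGraph_adj.2 (Or.inl rfl)),
        attach_adj_inl_inr.2 (Or.inl rfl), attach_adj_inl_inr.2 (Or.inr rfl)⟩
    have := hcl.isClique.card_le_chromaticNumber
    rwa [hcl.card_eq] at this

theorem sudokuNumber_attach (n : ℕ) (hn : 2 ≤ n) (i : ℕ) (hi : i + 1 < n) :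
    sudokuNumber (attachClique (pathGraph n) ⟨i, Nat.lt_of_succ_lt hi⟩ ⟨i + 1, hi⟩ 3) 3 = (n + 2) / 2 := by
  refine sudokuNumber_eq _ _ (fun S C hC => ?_) ((revealed n hn).image Sum.inl)
    (Finset.card_image_le.trans (card_revealed_le n hn)) (attachColoring n i hi) ?_
  · have := two_mul_card_le (attachClique (pathGraph n) ⟨i, Nat.lt_of_succ_lt hi⟩ ⟨i + 1, hi⟩ 3)
      (Sum.elim (fun k : Fin (n - 1) => (Sum.inl (⟨k.1, by omega⟩ : Fin n),
          Sum.inl (⟨k.1 + 1, by omega⟩ : Fin n)))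
        (fun b : Bool => (Sum.inl (if b then ⟨i, Nat.lt_of_succ_lt hi⟩ else ⟨i + 1, hi⟩), Sum.inr 0)))
      (by
        have key : ∀ (x : Fin n) (j : Fin (3 - 2)), x = ⟨i, Nat.lt_of_succ_lt hi⟩ ∨ x = ⟨i + 1, hi⟩ →
            ∃ b : Bool, ((Sum.inl (if b then ⟨i, Nat.lt_of_succ_lt hi⟩ else ⟨i + 1, hi⟩), Sum.inr 0) :
              (Fin n ⊕ Fin (3 - 2)) × (Fin n ⊕ Fin (3 - 2))) = (Sum.inl x, Sum.inr j) := by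
          intro x j hx
          have : (0 : Fin (3 - 2)) = j := Subsingleton.elim (α := Fin 1) 0 j
          subst this
          rcases hx with rfl | rfl
          · exact ⟨true, rfl⟩
          · exact ⟨false, rfl⟩
        rintro (x | x) (y | y) h
        · have hx := x.2
          have hy := y.2
          rcases pathGraph_adj.1 (attach_adj_inl_inl.1 h) with h | h
          · exact ⟨Sum.inl ⟨x.1, by omega⟩, Or.inl (by simp [h])⟩
          · exact ⟨Sum.inl ⟨y.1, by omega⟩, Or.inr (by simp [h])⟩
        · obtain ⟨b, hb⟩ := key x y (attach_adj_inl_inr.1 h)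
          exact ⟨Sum.inr b, Or.inl hb⟩
        · obtain ⟨b, hb⟩ := key y x (attach_adj_inl_inr.1 h.symm)
          exact ⟨Sum.inr b, Or.inr hb⟩
        · exact absurd h attach_not_adj_inr_inr) S C hC
    simp only [Fintype.card_sum, Fintype.card_fin, Fintype.card_bool] at this
    omega
  · intro C' h
    have hl : ∀ v : Fin n, C' (Sum.inl v) = modColor v.1 :=
      eq_modColor hn (fun v => C' (Sum.inl v))
        (fun u v huv => C'.valid (attach_adj_inl_inl.2 (pathGraph_adj.2 (Or.inl huv))))
        (fun v hv => h _ (Finset.mem_image_of_mem _ hv))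
    ext1 v
    rcases v with v | j
    · exact hl v
    · have h1 : C' (Sum.inl ⟨i, Nat.lt_of_succ_lt hi⟩) ≠ C' (Sum.inr j) :=
        C'.valid (attach_adj_inl_inr.2 (Or.inl rfl))
      have h2 : C' (Sum.inl ⟨i + 1, hi⟩) ≠ C' (Sum.inr j) :=
        C'.valid (attach_adj_inl_inr.2 (Or.inr rfl))
      rw [hl] at h1 h2
      exact fin3_forced _ _ (modColor i) (modColor (i + 1)) (modColor_ne (by omega)) h1.symm h2.symm
        (modColor_ne (a := i + 2) (by omega)) (modColor_ne (a := i + 2) (by omega))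

/-- For `n ≥ 2` and `H` obtained from `P_n` by attaching a triangle `K₃` onto one of its
edges, `sn(H) = sn(P_n, 3) = ⌈(n+1)/2⌉`. -/
theorem sudokuNum_path_attachTriangle (n : ℕ) (hn : 2 ≤ n) (i : ℕ) (hi : i + 1 < n) :
    sudokuNum (attachClique (pathGraph n) ⟨i, by omega⟩ ⟨i + 1, hi⟩ 3) =
      sudokuNumber (pathGraph n) 3 ∧
    sudokuNumber (pathGraph n) 3 = (n + 2) / 2 := by
  refine ⟨?_, sudokuNumber_path n hn⟩
  rw [sudokuNumber_path n hn, sudokuNum, chromaticNumber_attach n i hi]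
  exact sudokuNumber_attach n hn i hi
end

section
/- Let G be a finite connected bipartite simple graph with at least one edge, let m ≥ 3 be an integer, and let H be the graph obtained from G by attaching a complete graph K_m onto one edge of G (adding m − 2 new vertices that together with the two endpoints of that edge form a clique of size m). Then the Sudoku number of H satisfies sn(H) ≤ sn(G, m) + m − 3. -/
/-!
Write `H` for the graph with `K_m` attached on `uv`.  Since `G` is bipartite and `m ≥ 3`, every
proper `m`-coloring of `G` extends to `H` by giving the `m - 2` new vertices the `m - 2` colors
missing on `u` and `v`; together with the `m`-clique of `H` this yields `χ(H) = m`.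

Let `C` be the unique extension of an optimal `m`-Sudoku coloring of `G` on `S`, and extend `C`
to a coloring `D` of `H`.  Prescribe `D` on `S` together with all new vertices but one.  Any
`m`-coloring of `H` respecting this prescription restricts to `C` on `G`, and the remaining new
vertex lies in a clique with `m - 1` vertices of known distinct colors, so its color is forced.
This uses `|S| + (m - 3)` prescribed vertices.
-/

open SimpleGraph

section

variable {V : Type*} {G : SimpleGraph V} {u v : V} {m : ℕ}

lemma attachClique_adj_inl_inl (x y : V) :
    (attachClique G u v m).Adj (Sum.inl x) (Sum.inl y) ↔ G.Adj x y := by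
  simp only [attachClique, SimpleGraph.fromRel_adj]
  constructor
  · rintro ⟨-, h | h⟩ <;> simp at h
    · exact h
    · exact h.symm
  · intro h
    exact ⟨by simpa using h.ne, Or.inl (Or.inl ⟨x, y, rfl, rfl, h⟩)⟩

lemma attachClique_adj_inl_inr (x : V) (i : Fin (m - 2)) :
    (attachClique G u v m).Adj (Sum.inl x) (Sum.inr i) ↔ x = u ∨ x = v := by
  simp [attachClique, SimpleGraph.fromRel_adj]

lemma attachClique_adj_inr_inr (i j : Fin (m - 2)) :
    (attachClique G u v m).Adj (Sum.inr i) (Sum.inr j) ↔ i ≠ j := by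
  simp [attachClique, SimpleGraph.fromRel_adj]

/-- The colors different from those of the adjacent vertices `u` and `v` can be indexed by the
new vertices of the attached clique. -/
lemma exists_equiv_free_colors (huv : G.Adj u v) (C : G.Coloring (Fin m)) :
    Nonempty (Fin (m - 2) ≃ {c : Fin m // c ∉ ({C u, C v} : Finset (Fin m))}) := by
  refine ⟨Fintype.equivOfCardEq ?_⟩
  rw [Fintype.card_subtype_compl, Fintype.card_coe, Finset.card_pair (C.valid huv),
    Fintype.card_fin, Fintype.card_fin]

/-- The extension of an `m`-coloring of `G` to the attached clique that gives the new vertices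
the colors missing on `u` and `v`, in the order prescribed by `e`. -/
def extendColoring (C : G.Coloring (Fin m))
    (e : Fin (m - 2) ≃ {c : Fin m // c ∉ ({C u, C v} : Finset (Fin m))}) :
    (attachClique G u v m).Coloring (Fin m) :=
  SimpleGraph.Coloring.mk (Sum.elim C (fun i => (e i : Fin m))) (by
    have key : ∀ x i, (x = u ∨ x = v) → C x ≠ (e i : Fin m) := by
      intro x i hx h
      apply (e i).2
      rw [← h]
      rcases hx with rfl | rfl <;> simp
    rintro (x | i) (y | j) h
    · exact C.valid ((attachClique_adj_inl_inl x y).1 h)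
    · exact key x j ((attachClique_adj_inl_inr x j).1 h)
    · exact (key y i ((attachClique_adj_inl_inr y i).1 h.symm)).symm
    · intro h'
      exact (attachClique_adj_inr_inr i j).1 h (e.injective (Subtype.ext h')))

lemma chromaticNumber_attachClique (hbip : G.Colorable 2) (huv : G.Adj u v) (hm : 3 ≤ m) :
    (attachClique G u v m).chromaticNumber = m := by
  classical
  apply le_antisymm
  · obtain ⟨C⟩ := hbip.mono (show 2 ≤ m by omega)
    obtain ⟨e⟩ := exists_equiv_free_colors huv C
    exact SimpleGraph.Colorable.chromaticNumber_le ⟨extendColoring C e⟩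
  · have hc : (attachClique G u v m).IsClique
        ((({u, v} : Finset V).disjSum (Finset.univ : Finset (Fin (m - 2)))) :
          Set (V ⊕ Fin (m - 2))) := by
      rintro (x | i) hx (y | j) hy hne
      · rw [attachClique_adj_inl_inl]
        simp at hx hy hne
        rcases hx with rfl | rfl <;> rcases hy with rfl | rfl
        · exact absurd rfl hne
        · exact huv
        · exact huv.symm
        · exact absurd rfl hne
      · rw [attachClique_adj_inl_inr]
        simpa using hx
      · rw [SimpleGraph.adj_comm, attachClique_adj_inl_inr]
        simpa using hy
      · rw [attachClique_adj_inr_inr]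
        simpa using hne
    have h := hc.card_le_chromaticNumber
    rw [Finset.card_disjSum, Finset.card_pair huv.ne, Finset.card_univ, Fintype.card_fin,
      show 2 + (m - 2) = m by omega] at h
    exact h

end

/-- For a finite connected bipartite graph `G` with an edge `uv`, `m ≥ 3`, and `H` obtained
from `G` by attaching `K_m` onto the edge `uv`: `sn(H) ≤ sn(G, m) + m - 3`. -/
theorem sudokuNum_attachClique_le {V : Type*} [Fintype V] (G : SimpleGraph V)
    (hconn : G.Connected) (hbip : G.Colorable 2) (u v : V) (huv : G.Adj u v)
    (m : ℕ) (hm : 3 ≤ m) :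
    sudokuNum (attachClique G u v m) ≤ sudokuNumber G m + m - 3 := by
  classical
  rw [sudokuNum, chromaticNumber_attachClique hbip huv hm, ENat.toNat_natCast]
  -- Prescribing a whole coloring is a Sudoku coloring, so the infimum defining `sn(G, m)` is
  -- attained.
  have hne : {n | ∃ S : Finset V, S.card = n ∧ ∃ C0 : V → Fin m,
      ∃! C : G.Coloring (Fin m), ∀ x ∈ S, C x = C0 x}.Nonempty := by
    obtain ⟨C⟩ := hbip.mono (show 2 ≤ m by omega)
    exact ⟨_, Finset.univ, rfl, C, C, fun _ _ => rfl,
      fun C' h => RelHom.ext fun x => h x (Finset.mem_univ x)⟩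
  obtain ⟨S, hS, C0, C, hC, huniq⟩ := Nat.sInf_mem hne
  change S.card = sudokuNumber G m at hS
  obtain ⟨e⟩ := exists_equiv_free_colors huv C
  let i₀ : Fin (m - 2) := ⟨0, by omega⟩
  refine Nat.sInf_le ⟨S.disjSum (Finset.univ.erase i₀), ?_,
    extendColoring C e, extendColoring C e, fun _ _ => rfl, ?_⟩
  · rw [Finset.card_disjSum, Finset.card_erase_of_mem (Finset.mem_univ _), Finset.card_univ,
      Fintype.card_fin, hS]
    omega
  · intro D hD
    have hl : ∀ x, D (Sum.inl x) = C x := by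
      let D' : G.Coloring (Fin m) := SimpleGraph.Coloring.mk (fun x => D (Sum.inl x))
        (fun h => D.valid ((attachClique_adj_inl_inl _ _).2 h))
      have h : D' = C := huniq D' fun x hx =>
        (hD (Sum.inl x) (by simpa using hx)).trans (hC x hx)
      intro x
      exact congrArg (fun F : G.Coloring (Fin m) => F x) h
    have hr : ∀ i, i ≠ i₀ → D (Sum.inr i) = e i := fun i hi =>
      hD (Sum.inr i) (by simpa using hi)
    have h₀ : D (Sum.inr i₀) = e i₀ := by
      have hfree : D (Sum.inr i₀) ∉ ({C u, C v} : Finset (Fin m)) := by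
        rw [Finset.mem_insert, Finset.mem_singleton, ← hl u, ← hl v]
        rintro (h | h)
        · exact D.valid ((attachClique_adj_inl_inr u i₀).2 (Or.inl rfl)) h.symm
        · exact D.valid ((attachClique_adj_inl_inr v i₀).2 (Or.inr rfl)) h.symm
      obtain ⟨j, hj⟩ := e.surjective ⟨_, hfree⟩
      have hj' : (e j : Fin m) = D (Sum.inr i₀) := congrArg Subtype.val hj
      by_cases hji : j = i₀
      · rw [← hj', hji]
      · exact absurd ((hr j hji).trans hj')
          (D.valid ((attachClique_adj_inr_inr j i₀).2 hji))
    refine RelHom.ext ?_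
    rintro (x | i)
    · exact hl x
    · by_cases hi : i = i₀
      · rw [hi]
        exact h₀
      · exact hr i hi
end

section
/- Let G₁ be a finite connected simple graph of order n with chromatic number χ(G₁) = k ≥ 3. Let G₂ = G₁ ∘ kK₁ be the corona obtained by attaching k new pendant vertices to each vertex of G₁, and let G₃ be obtained from G₂ by adding one new vertex w adjacent to all vertices of G₁. Then χ(G₂) = k, χ(G₃) = k + 1, and sn(G₃) = sn(G₂, k+1) = n·k. -/
/-!
With `k + 1 ≥ 3` colors available, a pendant vertex outside the prescribed set `S` can always be
recolored (`mem_of_existsUnique_coloring`), so `S` contains all `n * k` pendant vertices. Conversely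
these suffice: fix a `k`-coloring `c` of `G₁` and give the `k` pendant vertices at `v` the `k`
colors different from `c v`; then `v` is forced to have color `c v` (`eq_of_agree_pendant`). As
`χ(G₁) = k`, the coloring `c` is surjective onto its `k` colors, so the added vertex is forced to
take the remaining color. Surjectivity of `k`-colorings of `G₁` also gives `χ(G₃) > k`.
-/

open SimpleGraph

/-- The corona `G ∘ l K₁`: attach `l` new pendant vertices to each vertex of `G`. -/
def corona {V : Type*} (G : SimpleGraph V) (l : ℕ) : SimpleGraph (V ⊕ V × Fin l) :=
  SimpleGraph.fromRel (fun a b =>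
    (∃ u v, a = Sum.inl u ∧ b = Sum.inl v ∧ G.Adj u v) ∨
    (∃ v i, a = Sum.inl v ∧ b = Sum.inr (v, i)))


/-- Add a new vertex (the `none` vertex) to `G`, adjacent to every vertex of the set `t`. -/
def addVertexAdjTo {V : Type*} (G : SimpleGraph V) (t : Set V) : SimpleGraph (Option V) :=
  SimpleGraph.fromRel (fun a b =>
    (∃ x y, a = some x ∧ b = some y ∧ G.Adj x y) ∨
    (∃ x ∈ t, a = none ∧ b = some x))

lemma corona_adj_inl_inl {V : Type*} {G : SimpleGraph V} {l : ℕ} {u v : V} :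
    (corona G l).Adj (Sum.inl u) (Sum.inl v) ↔ G.Adj u v := by
  simp only [corona, SimpleGraph.fromRel_adj]
  constructor
  · rintro ⟨-, (⟨a, b, ha, hb, h⟩ | ⟨a, i, ha, hb⟩) | (⟨a, b, ha, hb, h⟩ | ⟨a, i, ha, hb⟩)⟩ <;>
      cases ha <;> cases hb
    · exact h
    · exact h.symm
  · intro h
    exact ⟨fun e => h.ne (Sum.inl_injective e), Or.inl (Or.inl ⟨u, v, rfl, rfl, h⟩)⟩

lemma corona_adj_inl_inr {V : Type*} {G : SimpleGraph V} {l : ℕ} {u : V} {p : V × Fin l} :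
    (corona G l).Adj (Sum.inl u) (Sum.inr p) ↔ p.1 = u := by
  obtain ⟨v, i⟩ := p
  simp only [corona, SimpleGraph.fromRel_adj]
  constructor
  · rintro ⟨-, (⟨a, b, ha, hb, h⟩ | ⟨a, i, ha, hb⟩) | (⟨a, b, ha, hb, h⟩ | ⟨a, i, ha, hb⟩)⟩ <;>
      cases ha <;> cases hb
    rfl
  · rintro rfl
    exact ⟨by simp, Or.inl (Or.inr ⟨v, i, rfl, rfl⟩)⟩

lemma corona_not_adj_inr_inr {V : Type*} {G : SimpleGraph V} {l : ℕ} {p q : V × Fin l} :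
    ¬ (corona G l).Adj (Sum.inr p) (Sum.inr q) := by
  simp [corona, SimpleGraph.fromRel_adj]

lemma corona_adj_inr {V : Type*} {G : SimpleGraph V} {l : ℕ} {p : V × Fin l}
    {x : V ⊕ V × Fin l} (h : (corona G l).Adj (Sum.inr p) x) : x = Sum.inl p.1 := by
  rcases x with u | q
  · rw [corona_adj_inl_inr.1 h.symm]
  · exact absurd h corona_not_adj_inr_inr

lemma addVertexAdjTo_adj_some_some {W : Type*} {G : SimpleGraph W} {t : Set W} {x y : W} :
    (addVertexAdjTo G t).Adj (some x) (some y) ↔ G.Adj x y := by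
  simp only [addVertexAdjTo, SimpleGraph.fromRel_adj]
  constructor
  · rintro ⟨-, (⟨a, b, ha, hb, h⟩ | ⟨a, i, ha, hb⟩) | (⟨a, b, ha, hb, h⟩ | ⟨a, i, ha, hb⟩)⟩ <;>
      cases ha <;> cases hb
    · exact h
    · exact h.symm
  · intro h
    exact ⟨fun e => h.ne (Option.some_injective _ e), Or.inl (Or.inl ⟨x, y, rfl, rfl, h⟩)⟩

lemma addVertexAdjTo_adj_none_some {W : Type*} {G : SimpleGraph W} {t : Set W} {x : W} :
    (addVertexAdjTo G t).Adj none (some x) ↔ x ∈ t := by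
  simp [addVertexAdjTo, SimpleGraph.fromRel_adj]

/-- A vertex of degree at most one can be recolored as soon as three colors are available, so it
must belong to every set `S` carrying prescribed colors with a unique extension. -/
lemma mem_of_existsUnique_coloring {W : Type*} {G : SimpleGraph W} {m : ℕ} (hm : 3 ≤ m)
    {p u : W} (hp : ∀ x, G.Adj p x → x = u) {S : Finset W} {C0 : W → Fin m}
    (h : ∃! C : G.Coloring (Fin m), ∀ v ∈ S, C v = C0 v) : p ∈ S := by
  classical
  by_contra hpS
  obtain ⟨C, hC, huniq⟩ := h
  obtain ⟨a, ha⟩ : ∃ a, a ∉ ({C p, C u} : Finset (Fin m)) := by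
    by_contra! hall
    have h1 := Finset.card_le_card (fun a _ => hall a : Finset.univ ⊆ ({C p, C u} : Finset (Fin m)))
    have h2 := Finset.card_le_two (a := C p) (b := C u)
    simp only [Finset.card_univ, Fintype.card_fin] at h1
    omega
  simp only [Finset.mem_insert, Finset.mem_singleton, not_or] at ha
  let C' : G.Coloring (Fin m) := Coloring.mk (Function.update C p a) (by
    intro x y hxy
    by_cases hx : x = p
    · subst hx
      rw [Function.update_self, Function.update_of_ne hxy.ne', hp y hxy]
      exact ha.2
    · by_cases hy : y = p
      · subst hy
        rw [Function.update_self, Function.update_of_ne hx, hp x hxy.symm]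
        exact fun e => ha.2 e.symm
      · rw [Function.update_of_ne hx, Function.update_of_ne hy]
        exact C.valid hxy)
  have hEq : C' = C := huniq C' fun v hv => by
    have hvp : v ≠ p := fun e => hpS (e ▸ hv)
    exact (Function.update_of_ne hvp a C).trans (hC v hv)
  have hpa : C' p = a := by
    change Function.update C p a p = a
    exact Function.update_self ..
  exact ha.1 (by rw [← hpa, hEq])

/-- If the image of an injective family `f` consists of vertices of degree at most one, and some
coloring is determined by its values on that image, then the Sudoku number is the size of the
image: the previous lemma puts the image inside every admissible `S`. -/
lemma sudokuNumber_eq_card {W ι : Type*} [Fintype W] [Fintype ι] {G : SimpleGraph W} {m : ℕ}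
    (hm : 3 ≤ m) (f : ι ↪ W) (nb : ι → W) (hf : ∀ i x, G.Adj (f i) x → x = nb i)
    (C : G.Coloring (Fin m)) (hC : ∀ C' : G.Coloring (Fin m), (∀ i, C' (f i) = C (f i)) → C' = C) :
    sudokuNumber G m = Fintype.card ι := by
  apply le_antisymm
  · refine Nat.sInf_le ⟨Finset.univ.map f, by simp, C, C, fun _ _ => rfl, fun C' h => ?_⟩
    exact hC C' fun i => h _ (by simp)
  · refine le_csInf ⟨_, Finset.univ, rfl, C, C, fun _ _ => rfl, fun C' h => ?_⟩ ?_
    · exact DFunLike.ext _ _ fun v => h v (Finset.mem_univ v)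
    · rintro _ ⟨S, rfl, C0, hS⟩
      have hsub : Finset.univ.map f ⊆ S := by
        intro x hx
        obtain ⟨i, -, rfl⟩ := Finset.mem_map.1 hx
        exact mem_of_existsUnique_coloring hm (hf i) hS
      simpa using Finset.card_le_card hsub

/-- A coloring `c` of `G` extends to the corona: the `l` pendant vertices at `v` receive the `l`
colors of `Fin (l + 1)` different from `c v`, each exactly once. -/
def coronaColoring {V : Type*} {G : SimpleGraph V} {l : ℕ} (c : G.Coloring (Fin (l + 1))) :
    (corona G l).Coloring (Fin (l + 1)) :=
  Coloring.mk (Sum.elim c fun p => (c p.1).succAbove p.2) (by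
    rintro (u | p) (v | q) h
    · exact c.valid (corona_adj_inl_inl.1 h)
    · have := corona_adj_inl_inr.1 h
      subst this
      exact (Fin.succAbove_ne _ _).symm
    · have := corona_adj_inl_inr.1 h.symm
      subst this
      exact Fin.succAbove_ne _ _
    · exact absurd h corona_not_adj_inr_inr)

/-- The colors on the pendant vertices of `coronaColoring c` leave only `c v` available at `v`. -/
lemma eq_of_agree_pendant {V : Type*} {G : SimpleGraph V} {l : ℕ} (c : G.Coloring (Fin (l + 1)))
    (C' : (corona G l).Coloring (Fin (l + 1)))
    (h : ∀ p, C' (Sum.inr p) = coronaColoring c (Sum.inr p)) : C' = coronaColoring c := by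
  refine DFunLike.ext _ _ ?_
  rintro (v | p)
  · by_contra hne
    obtain ⟨i, hi⟩ := Fin.exists_succAbove_eq (x := C' (Sum.inl v)) (y := c v) hne
    exact C'.valid (corona_adj_inl_inr (p := (v, i)).2 rfl) (hi.symm.trans (h (v, i)).symm)
  · exact h p

/-- Embedding a `k`-coloring in `k + 1` colors leaves the color `Fin.last k` unused. -/
def castSuccColoring {V : Type*} {G : SimpleGraph V} {k : ℕ} (c : G.Coloring (Fin k)) :
    G.Coloring (Fin (k + 1)) :=
  Coloring.mk (fun v => (c v).castSucc)
    fun h e => c.valid h (Fin.castSucc_injective k e)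

/-- The extension of `coronaColoring` to the corona with an added vertex in which that vertex gets
the color `Fin.last k`, unused on `G` itself. -/
def addVertexColoring {V : Type*} {G : SimpleGraph V} {k : ℕ} (c : G.Coloring (Fin k)) :
    (addVertexAdjTo (corona G k) (Set.range Sum.inl)).Coloring (Fin (k + 1)) :=
  Coloring.mk (fun x => x.elim (Fin.last k) (coronaColoring (castSuccColoring c))) (by
    rintro (_ | x) (_ | y) h
    · exact absurd rfl h.ne
    · obtain ⟨v, rfl⟩ := addVertexAdjTo_adj_none_some.1 h
      exact (Fin.castSucc_lt_last (c v)).ne'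
    · obtain ⟨v, rfl⟩ := addVertexAdjTo_adj_none_some.1 h.symm
      exact (Fin.castSucc_lt_last (c v)).ne
    · exact (coronaColoring _).valid (addVertexAdjTo_adj_some_some.1 h))

/-- For a connected graph `G₁` of order `n` with `χ(G₁) = k ≥ 3`, the corona
`G₂ = G₁ ∘ kK₁` and the graph `G₃` obtained from `G₂` by adding a vertex adjacent to all
vertices of `G₁` satisfy `χ(G₂) = k`, `χ(G₃) = k + 1`, and `sn(G₃) = sn(G₂, k+1) = n·k`. -/
theorem sudokuNum_corona_addVertex {V : Type*} [Fintype V] (G₁ : SimpleGraph V)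
    (hconn : G₁.Connected) (k n : ℕ) (hk : 3 ≤ k)
    (hχ : G₁.chromaticNumber = (k : ℕ∞)) (hn : Fintype.card V = n) :
    (corona G₁ k).chromaticNumber = (k : ℕ∞) ∧
    (addVertexAdjTo (corona G₁ k) (Set.range Sum.inl)).chromaticNumber = ((k + 1 : ℕ) : ℕ∞) ∧
    sudokuNum (addVertexAdjTo (corona G₁ k) (Set.range Sum.inl)) =
      sudokuNumber (corona G₁ k) (k + 1) ∧
    sudokuNumber (corona G₁ k) (k + 1) = n * k := by
  classical
  have hsurj : ∀ c : G₁.Coloring (Fin k), Function.Surjective c :=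
    le_chromaticNumber_iff_forall_surjective.1 hχ.ge
  obtain ⟨c⟩ : G₁.Colorable k := chromaticNumber_le_iff_colorable.1 hχ.le
  let ι₁ : G₁ →g corona G₁ k := ⟨Sum.inl, fun h => corona_adj_inl_inl.2 h⟩
  let ι₂ : corona G₁ k →g addVertexAdjTo (corona G₁ k) (Set.range Sum.inl) :=
    ⟨some, fun h => addVertexAdjTo_adj_some_some.2 h⟩
  have hcard : Fintype.card (V × Fin k) = n * k := by simp [hn]
  have h₂ : sudokuNumber (corona G₁ k) (k + 1) = n * k := by
    rw [← hcard]
    exact sudokuNumber_eq_card (by omega) ⟨Sum.inr, Sum.inr_injective⟩ (fun p => Sum.inl p.1)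
      (fun _ _ h => corona_adj_inr h) (coronaColoring (castSuccColoring c))
      (eq_of_agree_pendant _)
  have hχ₃ : (addVertexAdjTo (corona G₁ k) (Set.range Sum.inl)).chromaticNumber =
      ((k + 1 : ℕ) : ℕ∞) := by
    apply le_antisymm
    · exact chromaticNumber_le_iff_colorable.2 ⟨addVertexColoring c⟩
    · -- A `k`-coloring would use every color on `G₁`, leaving none for the added vertex.
      have hnot : ¬ (addVertexAdjTo (corona G₁ k) (Set.range Sum.inl)).Colorable k := by
        rintro ⟨D⟩
        obtain ⟨v, hv⟩ := hsurj (D.comp (ι₂.comp ι₁)) (D none)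
        exact D.valid (addVertexAdjTo_adj_none_some.2 ⟨v, rfl⟩) hv.symm
      rw [← chromaticNumber_le_iff_colorable, not_le] at hnot
      exact_mod_cast Order.add_one_le_of_lt hnot
  have h₃ : sudokuNum (addVertexAdjTo (corona G₁ k) (Set.range Sum.inl)) = n * k := by
    rw [sudokuNum, hχ₃, ENat.toNat_natCast, ← hcard]
    refine sudokuNumber_eq_card (by omega)
      ⟨fun p => some (Sum.inr p), fun p q h => Sum.inr_injective (Option.some_injective _ h)⟩
      (fun p => some (Sum.inl p.1)) ?_ (addVertexColoring c) ?_
    · rintro p (_ | x) h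
      · obtain ⟨v, hv⟩ := addVertexAdjTo_adj_none_some.1 h.symm
        cases hv
      · rw [corona_adj_inr (addVertexAdjTo_adj_some_some.1 h)]
    · intro C' h
      have hres : C'.comp ι₂ = coronaColoring (castSuccColoring c) := eq_of_agree_pendant _ _ h
      have hsome : ∀ x, C' (some x) = coronaColoring (castSuccColoring c) x :=
        fun x => DFunLike.congr_fun hres x
      refine DFunLike.ext _ _ ?_
      rintro (_ | x)
      · -- The colors of `G₁` exhaust `Fin k`, so only `Fin.last k` remains for the added vertex.
        rcases Fin.eq_castSucc_or_eq_last (C' none) with ⟨a, ha⟩ | hlast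
        · obtain ⟨v, rfl⟩ := hsurj c a
          exact absurd (ha.trans (hsome (Sum.inl v)).symm)
            (C'.valid (addVertexAdjTo_adj_none_some.2 ⟨v, rfl⟩))
        · exact hlast
      · exact hsome x
  refine ⟨?_, hχ₃, h₃.trans h₂.symm, h₂⟩
  apply le_antisymm
  · -- With at least two colors, every pendant vertex can avoid the color of its neighbor.
    have : Nontrivial (Fin k) := Fin.nontrivial_iff_two_le.2 (by omega)
    choose g hg using fun a : Fin k => exists_ne a
    refine chromaticNumber_le_iff_colorable.2
      ⟨Coloring.mk (Sum.elim c fun p => g (c p.1)) ?_⟩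
    rintro (u | p) (v | q) h
    · exact c.valid (corona_adj_inl_inl.1 h)
    · have := corona_adj_inl_inr.1 h
      subst this
      exact (hg _).symm
    · have := corona_adj_inl_inr.1 h.symm
      subst this
      exact hg _
    · exact absurd h corona_not_adj_inr_inr
  · rw [← hχ]
    exact chromaticNumber_mono_of_hom ι₁
end

section
/- Let G be a finite simple graph with chromatic number χ(G) = k ≥ 3, let S be a proper subset of V(G), and let C₀ be a proper k-coloring of the induced subgraph G[S] that extends to a proper k-coloring of G. If there exists an edge xy of G with x ∉ S and y ∉ S such that deg(x) ≤ k − 1 and deg(y) ≤ k − 1, then C₀ is not a Sudoku coloring of G; that is, there exist at least two distinct proper k-colorings of G whose restriction to S equals C₀. -/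
/-!
Fix a proper coloring `C` extending `C₀` and call a color available at `x` if no neighbor of `x`
other than `y` has it, and symmetrically for `y`. At most `k - 2` colors are unavailable at `x`, so
some color `c ≠ C x` is available there (`exists_alternative_color`); likewise some `d ≠ C y` at
`y`. Any pair of distinct available colors may be placed on `x` and `y`
(`exists_recoloring_of_edge`). If `c ≠ C y`, recolor `x` with `c`; if `d ≠ C x`, recolor `y` with
`d`; otherwise `c = C y` and `d = C x`, so the colors of `x` and `y` can be swapped.
-/

open SimpleGraph

/-- At an endpoint `x` of an edge `xy`, the degree bound leaves a color other than `C x` that is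
not forbidden by the neighbors of `x` different from `y`. -/
lemma exists_alternative_color {V : Type*} [Fintype V] (G : SimpleGraph V)
    [DecidableRel G.Adj] {k : ℕ} (hk : 2 ≤ k) (C : G.Coloring (Fin k)) {x y : V}
    (hxy : G.Adj x y) (hdx : G.degree x ≤ k - 1) :
    ∃ c : Fin k, c ≠ C x ∧ ∀ u, G.Adj x u → u ≠ y → C u ≠ c := by
  classical
  have hcard : (insert (C x) (((G.neighborFinset x).erase y).image C)).card
      < Fintype.card (Fin k) := by
    have h1 := Finset.card_insert_le (C x) (((G.neighborFinset x).erase y).image C)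
    have h2 := Finset.card_image_le (s := (G.neighborFinset x).erase y) (f := C)
    have h3 : ((G.neighborFinset x).erase y).card = G.degree x - 1 := by
      rw [Finset.card_erase_of_mem (by simpa using hxy), card_neighborFinset_eq_degree]
    rw [Fintype.card_fin]
    omega
  obtain ⟨c, hc⟩ : ∃ c, c ∉ insert (C x) (((G.neighborFinset x).erase y).image C) := by
    by_contra! h
    rw [Finset.eq_univ_of_forall h, Finset.card_univ] at hcard
    exact lt_irrefl _ hcard
  refine ⟨c, fun h => hc (by simp [h]), fun u hu huy h => hc ?_⟩
  refine Finset.mem_insert_of_mem (Finset.mem_image.2 ⟨u, ?_, h⟩)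
  simpa using ⟨huy, hu⟩

lemma exists_recoloring_of_edge {V α : Type*} (G : SimpleGraph V) (C : G.Coloring α) {x y : V}
    (hxy : G.Adj x y) (p q : α) (hpq : p ≠ q)
    (hp : ∀ u, G.Adj x u → u ≠ y → C u ≠ p) (hq : ∀ u, G.Adj y u → u ≠ x → C u ≠ q) :
    ∃ C' : G.Coloring α, C' x = p ∧ C' y = q ∧ ∀ u, u ≠ x → u ≠ y → C' u = C u := by
  classical
  have hne := hxy.ne
  refine ⟨Coloring.mk (fun u => if u = x then p else if u = y then q else C u) ?_, ?_, ?_, ?_⟩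
  · intro u v huv
    have hC := C.valid huv
    have hvu := huv.symm
    have huv' := huv.ne
    grind
  · exact if_pos rfl
  · exact (if_neg hne.symm).trans (if_pos rfl)
  · intro u hux huy
    exact (if_neg hux).trans (if_neg huy)

/-- If `χ(G) = k ≥ 3`, `S ⊊ V`, and `C₀` is a partial proper `k`-coloring on `S` extending
to a proper `k`-coloring of `G`, and there is an edge `xy` with `x, y ∉ S` and
`deg(x), deg(y) ≤ k - 1`, then the extension is not unique: there are two distinct proper
`k`-colorings of `G` agreeing with `C₀` on `S`. -/
theorem not_sudoku_of_low_degree_edge {V : Type*} [Fintype V] (G : SimpleGraph V)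
    [DecidableRel G.Adj] (k : ℕ) (hk : 3 ≤ k) (hχ : G.chromaticNumber = (k : ℕ∞))
    (S : Set V) (hS : S ⊂ Set.univ) (C0 : V → Fin k)
    (hext : ∃ C : G.Coloring (Fin k), ∀ v ∈ S, C v = C0 v)
    (x y : V) (hxy : G.Adj x y) (hx : x ∉ S) (hy : y ∉ S)
    (hdx : G.degree x ≤ k - 1) (hdy : G.degree y ≤ k - 1) :
    ∃ C₁ C₂ : G.Coloring (Fin k), C₁ ≠ C₂ ∧
      (∀ u ∈ S, C₁ u = C0 u) ∧ (∀ u ∈ S, C₂ u = C0 u) := by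
  obtain ⟨C, hC⟩ := hext
  obtain ⟨c, hcx, hc⟩ := exists_alternative_color G (by omega) C hxy hdx
  obtain ⟨d, hdy', hd⟩ := exists_alternative_color G (by omega) C hxy.symm hdy
  have hCxy : C x ≠ C y := C.valid hxy
  have key : ∀ p q : Fin k, p ≠ q → (∀ u, G.Adj x u → u ≠ y → C u ≠ p) →
      (∀ u, G.Adj y u → u ≠ x → C u ≠ q) → (p ≠ C x ∨ q ≠ C y) →
      ∃ C₁ C₂ : G.Coloring (Fin k), C₁ ≠ C₂ ∧
        (∀ u ∈ S, C₁ u = C0 u) ∧ (∀ u ∈ S, C₂ u = C0 u) := by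
    intro p q hpq hp hq hne
    obtain ⟨C', h1, h2, h3⟩ := exists_recoloring_of_edge G C hxy p q hpq hp hq
    refine ⟨C', C, ?_, fun u hu => ?_, hC⟩
    · rintro rfl
      exact hne.elim (fun h => h h1.symm) (fun h => h h2.symm)
    · rw [h3 u (fun h => hx (h ▸ hu)) (fun h => hy (h ▸ hu)), hC u hu]
  by_cases hcy : c = C y
  · by_cases hdx' : d = C x
    · exact key c d (by rw [hcy, hdx']; exact hCxy.symm) hc hd (Or.inl hcx)
    · exact key (C x) d (Ne.symm hdx') (fun u hu _ => (C.valid hu).symm) hd (Or.inr hdy')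
  · exact key c (C y) hcy hc (fun u hu _ => (C.valid hu).symm) (Or.inl hcx)
end
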